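/- arXiv:2507.10730 — 6 statements merged into one kernel-verified Lean document; each statement's English description precedes it below -/
import Mathlib

section
/- Let p be a prime, let F ∈ (ZMod p)[X] have degree exactly 2, and let c₁, c₂, c₃ ∈ ZMod p be pairwise distinct. Then the three Lagrange interpolants of F on the two-element node sets {c₁,c₂}, {c₂,c₃}, {c₃,c₁} (each the unique polynomial of degree ≤ 1 agreeing with F at its two nodes) are pairwise distinct polynomials. Moreover, if in addition c₁, c₂, c₃ are all nonzero, then the three reconstructed secrets — the evaluations of these three interpolants at 0 — are pairwise distinct elements of ZMod p. (Paper's Theorem 1: incorrectly created shares, whose secret polynomial has degree two, produce inconsistent pairwise interpolation results.) -/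
open Polynomial

/-!
Write `F = a X² + b X + c` with `a ≠ 0`. Its interpolant at two distinct nodes `u, v` is
`F - a (X - u) (X - v) = (a (u + v) + b) X + (c - a u v)`. Any two of the node pairs share exactly
one node: with pairs `{u, v}` and `{v, w}`, the linear coefficients differ by `a (u - w) ≠ 0`, and the
values at `0` differ by `a v (w - u)`, which is nonzero as soon as `v ≠ 0`.
-/

/-- The interpolant of a quadratic at two nodes is its remainder modulo `(X - u) (X - v)`. -/
lemma interpolate_pair_of_degree_two {K : Type*} [Field K] [DecidableEq K] (F : K[X])
    (hF : F.degree = 2) {u v : K} (huv : u ≠ v) :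
    Lagrange.interpolate {u, v} id (fun x => F.eval x) =
      C (F.coeff 2 * (u + v) + F.coeff 1) * X + C (F.coeff 0 - F.coeff 2 * u * v) := by
  have hev : ∀ x, F.eval x = F.coeff 2 * x ^ 2 + F.coeff 1 * x + F.coeff 0 := by
    intro x
    conv_lhs => rw [eq_quadratic_of_degree_le_two hF.le]
    simp
  symm
  apply Lagrange.eq_interpolate_of_eval_eq _ Function.injective_id.injOn
  · rw [Finset.card_pair huv]
    exact lt_of_le_of_lt degree_linear_le (by norm_num)
  · intro x hx
    rw [hev]
    simp only [Finset.mem_insert, Finset.mem_singleton] at hx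
    rcases hx with rfl | rfl <;> simp <;> ring

/-- Interpolants on two pairs sharing exactly the node `v` differ by a nonzero multiple of `X - v`;
hence they are distinct, and their values at `0` are too when `v ≠ 0`. -/
lemma interpolate_pair_ne {K : Type*} [Field K] [DecidableEq K] (F : K[X])
    (hF : F.degree = 2) {u v w : K} (huv : u ≠ v) (hvw : v ≠ w) (huw : u ≠ w) :
    Lagrange.interpolate {u, v} id (fun x => F.eval x) ≠
        Lagrange.interpolate {v, w} id (fun x => F.eval x) ∧
      (v ≠ 0 → (Lagrange.interpolate {u, v} id (fun x => F.eval x)).eval 0 ≠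
        (Lagrange.interpolate {v, w} id (fun x => F.eval x)).eval 0) := by
  have ha : F.coeff 2 ≠ 0 := coeff_ne_zero_of_eq_degree hF
  rw [interpolate_pair_of_degree_two F hF huv, interpolate_pair_of_degree_two F hF hvw]
  refine ⟨fun h => ?_, fun hv h => ?_⟩
  · have h1 := congrArg (fun P => P.coeff 1) h
    simp only [coeff_add, coeff_C_mul, coeff_X_one, coeff_C_succ, mul_one, add_zero] at h1
    exact mul_ne_zero ha (sub_ne_zero.mpr huw) (by linear_combination h1)
  · simp only [eval_add, eval_mul, eval_C, eval_X, mul_zero, zero_add] at h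
    exact mul_ne_zero (mul_ne_zero ha hv) (sub_ne_zero.mpr huw) (by linear_combination -h)

/-- Paper's Theorem 1: if the shared "secret polynomial" `F` has degree exactly 2
(i.e. the shares were created incorrectly), then the three pairwise Lagrange
interpolants on `{c₁,c₂}`, `{c₂,c₃}`, `{c₃,c₁}` are pairwise distinct polynomials,
and (for nonzero nodes) the three reconstructed secrets, i.e. their evaluations
at `0`, are pairwise distinct. -/
theorem stmt_1 (p : ℕ) [Fact p.Prime] (F : Polynomial (ZMod p)) (hF : F.degree = 2)
    (c₁ c₂ c₃ : ZMod p) (h12 : c₁ ≠ c₂) (h13 : c₁ ≠ c₃) (h23 : c₂ ≠ c₃) :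
    (Lagrange.interpolate {c₁, c₂} id (fun x => F.eval x) ≠
        Lagrange.interpolate {c₂, c₃} id (fun x => F.eval x) ∧
      Lagrange.interpolate {c₂, c₃} id (fun x => F.eval x) ≠
        Lagrange.interpolate {c₃, c₁} id (fun x => F.eval x) ∧
      Lagrange.interpolate {c₁, c₂} id (fun x => F.eval x) ≠
        Lagrange.interpolate {c₃, c₁} id (fun x => F.eval x)) ∧
    (c₁ ≠ 0 → c₂ ≠ 0 → c₃ ≠ 0 →
      ((Lagrange.interpolate {c₁, c₂} id (fun x => F.eval x)).eval 0 ≠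
          (Lagrange.interpolate {c₂, c₃} id (fun x => F.eval x)).eval 0 ∧
        (Lagrange.interpolate {c₂, c₃} id (fun x => F.eval x)).eval 0 ≠
          (Lagrange.interpolate {c₃, c₁} id (fun x => F.eval x)).eval 0 ∧
        (Lagrange.interpolate {c₁, c₂} id (fun x => F.eval x)).eval 0 ≠
          (Lagrange.interpolate {c₃, c₁} id (fun x => F.eval x)).eval 0)) := by
  have h₁ := interpolate_pair_ne F hF h12 h23 h13
  have h₂ := interpolate_pair_ne F hF h23 h13.symm h12.symm
  have h₃ := interpolate_pair_ne F hF h13.symm h12 h23.symm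
  exact ⟨⟨h₁.1, h₂.1, h₃.1.symm⟩,
    fun hc₁ hc₂ hc₃ => ⟨h₁.2 hc₂, h₂.2 hc₃, (h₃.2 hc₁).symm⟩⟩
end

section
/- Let p be a prime and θ ∈ ZMod p with θ ≠ 0. For any tuple (v₁, v₂, v₃, v₄, v₅, v₆) ∈ (ZMod p)⁶, the following are equivalent: (i) there exist a₁, b₁, R, h₁, h₂ ∈ ZMod p such that a₁ + θ = v₁, b₁ + R = v₂, a₁·b₁ + h₁ = v₃, θ·b₁ + R·a₁ + h₂ = v₄, θ·R = v₅, and h₁ + h₂ = v₆; (ii) v₁·v₂ + v₆ = v₃ + v₄ + v₅. In particular, the set of achievable view tuples is the same for every nonzero θ, so the view determines nothing about θ beyond the single identity (ii). -/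
/-- Paper's Theorem 2: the view of a malicious client colluding with one malicious
server in Phase 1 is achievable (for some internal randomness `a₁ b₁ R h₁ h₂`) iff
the single identity `v₁·v₂ + v₆ = v₃ + v₄ + v₅` holds — for every nonzero secret
`θ`.  Hence the view reveals nothing about `θ`. -/
theorem stmt_2 (p : ℕ) (hp : p.Prime) (θ : ZMod p) (hθ : θ ≠ 0)
    (v₁ v₂ v₃ v₄ v₅ v₆ : ZMod p) :
    (∃ a₁ b₁ R h₁ h₂ : ZMod p,
        a₁ + θ = v₁ ∧ b₁ + R = v₂ ∧ a₁ * b₁ + h₁ = v₃ ∧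
        θ * b₁ + R * a₁ + h₂ = v₄ ∧ θ * R = v₅ ∧ h₁ + h₂ = v₆) ↔
      v₁ * v₂ + v₆ = v₃ + v₄ + v₅ := by
  have : Fact p.Prime := ⟨hp⟩
  constructor
  · rintro ⟨a₁, b₁, R, h₁, h₂, rfl, rfl, rfl, rfl, rfl, rfl⟩
    ring
  · intro h
    -- As `θ` is invertible, `θ * R = v₅` determines `R`; the other four unknowns are then
    -- forced, and the last equation is the assumed identity.
    obtain ⟨R, hR⟩ : ∃ R : ZMod p, θ * R = v₅ := ⟨θ⁻¹ * v₅, mul_inv_cancel_left₀ hθ v₅⟩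
    refine ⟨v₁ - θ, v₂ - R, R, v₃ - (v₁ - θ) * (v₂ - R),
      v₄ - (θ * (v₂ - R) + R * (v₁ - θ)), ?_, ?_, ?_, ?_, hR, ?_⟩
    · ring
    · ring
    · ring
    · ring
    · linear_combination -h + hR
end

section
/- Let K be a field and let a₁, θ, b₁, R₁, b₂, R₂ ∈ K with a₁ ≠ 0, b₁ ≠ 0, b₂ ≠ 0 and b₁·R₂ ≠ b₂·R₁. Define F₁ = (C a₁·X + C θ)·(C b₁·X + C R₁) and F₂ = (C a₁·X + C θ)·(C b₂·X + C R₂) in K[X]. Then the greatest common divisor of F₁ and F₂ is associated to the linear polynomial C a₁·X + C θ (equivalently, the monic gcd equals X + C(θ·a₁⁻¹)). (This is the common-divisor attack underlying the paper's Theorem 3: without randomization, two product polynomials from repeated identical queries share exactly the factor a₁X + θ, allowing a colluding client to recover the secret θ.) -/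
/-!
Write `L = a₁X + θ` and `Fᵢ = L (bᵢX + Rᵢ)`. Then `L` divides both `Fᵢ`, hence their gcd. Conversely the
combination `b₁ F₂ - b₂ F₁` eliminates the linear terms of the cofactors and equals
`(b₁R₂ - b₂R₁) L`, a nonzero scalar multiple of `L`, so the gcd divides `L`. A polynomial
associated to `L` is `c L` with `c ≠ 0`, and dividing by its leading coefficient `c a₁`
gives `X + θ a₁⁻¹`.
-/

open Polynomial

/-- The common-divisor attack underlying the paper's Theorem 3: the gcd of the two
product polynomials `(a₁X+θ)(b₁X+R₁)` and `(a₁X+θ)(b₂X+R₂)` is associated to the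
linear polynomial `a₁X+θ`; equivalently its monic normalization is
`X + C (θ·a₁⁻¹)`. -/
theorem stmt_4 (K : Type*) [Field K] [DecidableEq K] (a₁ θ b₁ R₁ b₂ R₂ : K)
    (ha : a₁ ≠ 0) (hb₁ : b₁ ≠ 0) (hb₂ : b₂ ≠ 0) (h : b₁ * R₂ ≠ b₂ * R₁) :
    Associated
      (EuclideanDomain.gcd ((C a₁ * X + C θ) * (C b₁ * X + C R₁))
        ((C a₁ * X + C θ) * (C b₂ * X + C R₂)))
      (C a₁ * X + C θ) ∧
    C (EuclideanDomain.gcd ((C a₁ * X + C θ) * (C b₁ * X + C R₁))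
          ((C a₁ * X + C θ) * (C b₂ * X + C R₂))).leadingCoeff⁻¹ *
        EuclideanDomain.gcd ((C a₁ * X + C θ) * (C b₁ * X + C R₁))
          ((C a₁ * X + C θ) * (C b₂ * X + C R₂)) =
      X + C (θ * a₁⁻¹) := by
  have hgcd : Associated
      (EuclideanDomain.gcd ((C a₁ * X + C θ) * (C b₁ * X + C R₁))
        ((C a₁ * X + C θ) * (C b₂ * X + C R₂)))
      (C a₁ * X + C θ) := by
    apply associated_of_dvd_dvd
    · have hd : b₁ * R₂ - b₂ * R₁ ≠ 0 := sub_ne_zero.mpr h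
      have hu : IsUnit (C (b₁ * R₂ - b₂ * R₁)) := isUnit_C.mpr hd.isUnit
      rw [← hu.dvd_mul_right]
      have key : (C a₁ * X + C θ) * C (b₁ * R₂ - b₂ * R₁) =
          ((C a₁ * X + C θ) * (C b₂ * X + C R₂)) * C b₁ -
            ((C a₁ * X + C θ) * (C b₁ * X + C R₁)) * C b₂ := by
        simp only [C_sub, C_mul]
        ring
      rw [key]
      exact dvd_sub (dvd_mul_of_dvd_left (EuclideanDomain.gcd_dvd_right _ _) _)
        (dvd_mul_of_dvd_left (EuclideanDomain.gcd_dvd_left _ _) _)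
    · exact EuclideanDomain.dvd_gcd (dvd_mul_right _ _) (dvd_mul_right _ _)
  refine ⟨hgcd, ?_⟩
  generalize EuclideanDomain.gcd ((C a₁ * X + C θ) * (C b₁ * X + C R₁))
    ((C a₁ * X + C θ) * (C b₂ * X + C R₂)) = g at hgcd
  obtain ⟨u, rfl⟩ := hgcd.symm
  obtain ⟨c, hc, hcu⟩ := Polynomial.isUnit_iff.mp u.isUnit
  have hc0 : c ≠ 0 := hc.ne_zero
  rw [← hcu, leadingCoeff_mul, leadingCoeff_linear ha, leadingCoeff_C]
  calc C (a₁ * c)⁻¹ * ((C a₁ * X + C θ) * C c)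
      = C ((a₁ * c)⁻¹ * a₁ * c) * X + C ((a₁ * c)⁻¹ * θ * c) := by
        simp only [C_mul]
        ring
    _ = X + C (θ * a₁⁻¹) := by
        have h1 : (a₁ * c)⁻¹ * a₁ * c = 1 := by field_simp
        have h2 : (a₁ * c)⁻¹ * θ * c = θ * a₁⁻¹ := by field_simp
        rw [h1, h2, C_1, one_mul]
end

section
/- Let K be a field, let n ∈ ℕ, and let f, g : Fin n → K[X] be families of polynomials with degree (f j) ≤ 1 and degree (g j) ≤ 1 for every j. Let c₁, c₂, c₃ ∈ K be pairwise distinct. Then the Lagrange interpolant on {c₁, c₂, c₃} of the locally computed dot-product values cᵢ ↦ ∑_{j} (f j)(cᵢ)·(g j)(cᵢ) equals the polynomial ∑_j (f j)·(g j), and its evaluation at 0 equals ∑_j (f j)(0)·(g j)(0). (Correctness of the secret-shared dot product used throughout Phases 1–3: servers compute the dot product of their share vectors locally, and interpolating three such results reconstructs the dot product of the cleartext vectors.) -/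
/-!
The sum `∑ j, f j * g j` has degree at most two and takes the locally computed values at the
three distinct nodes, so it is the interpolant, by uniqueness of Lagrange interpolation
(`Lagrange.eq_interpolate_of_eval_eq`). Evaluating at `0` gives the second claim.
-/

open Polynomial

/-- Correctness of the secret-shared dot product: interpolating, at three pairwise
distinct nodes, the locally computed dot products of the share vectors recovers
the polynomial `∑ j, f j * g j`, whose evaluation at `0` is the dot product of the
cleartext vectors. -/
theorem stmt_10 (K : Type*) [Field K] [DecidableEq K] (n : ℕ)
    (f g : Fin n → Polynomial K)
    (hf : ∀ j, (f j).degree ≤ 1) (hg : ∀ j, (g j).degree ≤ 1)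
    (c₁ c₂ c₃ : K) (h12 : c₁ ≠ c₂) (h13 : c₁ ≠ c₃) (h23 : c₂ ≠ c₃) :
    Lagrange.interpolate {c₁, c₂, c₃} id
        (fun x => ∑ j, (f j).eval x * (g j).eval x) = ∑ j, f j * g j ∧
    (Lagrange.interpolate {c₁, c₂, c₃} id
        (fun x => ∑ j, (f j).eval x * (g j).eval x)).eval 0 =
      ∑ j, (f j).eval 0 * (g j).eval 0 := by
  have key : Lagrange.interpolate {c₁, c₂, c₃} id
      (fun x => ∑ j, (f j).eval x * (g j).eval x) = ∑ j, f j * g j := by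
    symm
    apply Lagrange.eq_interpolate_of_eval_eq _ Function.injective_id.injOn
    · -- Each product has degree at most `1 + 1`, which is below the number of nodes.
      rw [Finset.card_eq_three.mpr ⟨c₁, c₂, c₃, h12, h13, h23, rfl⟩]
      have h2 : (∑ j, f j * g j).degree ≤ ((2 : ℕ) : WithBot ℕ) :=
        (Polynomial.degree_sum_le _ _).trans <| Finset.sup_le fun j _ =>
          (Polynomial.degree_mul_le_of_le (hf j) (hg j)).trans (by norm_num)
      exact h2.trans_lt (by exact_mod_cast Nat.lt_succ_self 2)
    · simp [Polynomial.eval_finsetSum]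
  refine ⟨key, ?_⟩
  rw [key]
  simp [Polynomial.eval_finsetSum]
end

section
/- Let p be a prime and N a natural number with N < p. Let sw, uw ∈ ℕ with sw ≤ N and uw ≤ N (the numerical encodings of the server-stored keyword and the queried keyword). Let AC ∈ ℕ be the access-control value, satisfying AC = 0 or (N < AC and AC + N < p). Let RN ∈ ZMod p with RN ≠ 0. Then ((sw : ZMod p) − (uw : ZMod p) + (AC : ZMod p)) · RN = 0 if and only if sw = uw and AC = 0. (Correctness of Phase 1 of the protocol: the per-keyword answer is zero exactly when the query keyword matches the stored keyword and the client has search access, with no false positives because denied-access random numbers exceed every keyword encoding.) -/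
/-- Correctness of Phase 1: the per-keyword answer `(sw − uw + AC)·RN` is zero in
`ZMod p` iff the query keyword matches the stored keyword and the client has
search access (`AC = 0`); denied-access random numbers (which exceed every keyword
encoding and do not wrap modulo `p`) never cause false positives. -/
theorem stmt_13 (p : ℕ) (hp : p.Prime) (N : ℕ) (hN : N < p)
    (sw uw : ℕ) (hsw : sw ≤ N) (huw : uw ≤ N)
    (AC : ℕ) (hAC : AC = 0 ∨ (N < AC ∧ AC + N < p))
    (RN : ZMod p) (hRN : RN ≠ 0) :
    ((sw : ZMod p) - (uw : ZMod p) + (AC : ZMod p)) * RN = 0 ↔ sw = uw ∧ AC = 0 := by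
  haveI : Fact p.Prime := ⟨hp⟩
  constructor
  · intro h
    have h0 : ((sw + AC : ℕ) : ZMod p) = (uw : ZMod p) := by
      push_cast
      linear_combination (mul_eq_zero.mp h).resolve_right hRN
    -- Both representatives lie below `p`, so the congruence is an equality in `ℕ`;
    -- a nonzero `AC` would then force `uw ≥ AC > N`.
    have h1 : sw + AC = uw :=
      Nat.ModEq.eq_of_lt_of_lt ((ZMod.natCast_eq_natCast_iff _ _ _).mp h0)
        (by omega) (by omega)
    omega
  · rintro ⟨rfl, rfl⟩
    simp
end

section
/- Let p be a prime and n a natural number with n < p, and let v : Fin n → ZMod p. Suppose v passes Test C and Test A, i.e., (v i)² = v i for every i, and ∑ i, v i = 1. Then there exists a unique index i with v i ≠ 0; moreover for this index v i = 1 and v j = 0 for all j ≠ i. (Soundness of the server-side vector verification: a vector passing the squaring test entry-wise and summing to one is exactly a one-hot vector, so a malicious client cannot submit a malformed selection vector.) -/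
/-!
`ZMod p` is a field, so an idempotent entry is `0` or `1`. The sum of the entries is therefore
the cardinality of the support, cast to `ZMod p`. That cardinality is at most `n < p`, so being
congruent to `1` modulo `p` forces it to be exactly `1`: the support is a singleton.
-/

/-- Soundness of the server-side vector verification (Tests A and C): a vector
over `ZMod p` whose entries are idempotent and sum to `1`, with fewer entries than
`p`, is exactly a one-hot vector. -/
theorem stmt_14 (p : ℕ) (hp : p.Prime) (n : ℕ) (hn : n < p) (v : Fin n → ZMod p)
    (hC : ∀ i, (v i) ^ 2 = v i) (hA : ∑ i, v i = 1) :
    (∃! i : Fin n, v i ≠ 0) ∧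
    ∀ i : Fin n, v i ≠ 0 → v i = 1 ∧ ∀ j, j ≠ i → v j = 0 := by
  classical
  haveI : Fact p.Prime := ⟨hp⟩
  have h_one : ∀ i, v i ≠ 0 → v i = 1 := fun i hi =>
    mul_left_cancel₀ hi (by rw [mul_one, ← sq, hC i])
  set S : Finset (Fin n) := Finset.univ.filter (fun i => v i ≠ 0) with hS
  -- The entries are `0` or `1`, so their sum is the size of the support, reduced mod `p`.
  have h_cast : ((S.card : ℕ) : ZMod p) = ((1 : ℕ) : ZMod p) := by
    rw [Nat.cast_one, ← hA, hS, Finset.natCast_card_filter]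
    refine Finset.sum_congr rfl fun i _ => ?_
    split_ifs with hi
    · exact (h_one i hi).symm
    · exact (not_not.mp hi).symm
  -- As `n < p`, the support size is below `p`, and the congruence is an equality in `ℕ`.
  have h_lt : S.card < p := lt_of_le_of_lt (by simpa using Finset.card_le_univ S) hn
  have h_card : S.card = 1 := by
    have h := (ZMod.natCast_eq_natCast_iff' _ _ _).mp h_cast
    rwa [Nat.mod_eq_of_lt h_lt, Nat.mod_eq_of_lt hp.one_lt] at h
  obtain ⟨a, ha⟩ := Finset.card_eq_one.mp h_card
  have h_iff : ∀ i, v i ≠ 0 ↔ i = a := fun i => by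
    rw [← Finset.mem_singleton, ← ha, hS]
    simp
  refine ⟨⟨a, (h_iff a).mpr rfl, fun i hi => (h_iff i).mp hi⟩, fun i hi => ⟨h_one i hi, ?_⟩⟩
  intro j hj
  by_contra h
  exact hj (((h_iff j).mp h).trans ((h_iff i).mp hi).symm)
end
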